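/- arXiv:2401.02890 — 2 statements merged into one kernel-verified Lean document; each statement's English description precedes it below -/
import Mathlib

section
/- Let d₁, N be positive integers, L ≥ 0 and R > 0. Let ψ : ℝ^{d₁} → ℝ be defined by ψ(y) = σ(min{ min_{k≠j}(1 + y_k − y_j), min_k(1 + y_k), min_k(1 − y_k) }), where σ(u) = max{u,0} is the ReLU function. Let h : ℝ^{d₁} → ℝ be any function of the form h(y) = ∑_{i=1}^{(N+1)^{d₁}} c_i ψ( (N/(2R)) (y − b_i) ), where c_i ∈ ℝ with |c_i| ≤ L and b_i ∈ ℝ^{d₁}. Then for all x, y ∈ ℝ^{d₁}, |h(x) − h(y)| ≤ (L/R) · N (N+1)^{d₁} (d₁² + d₁) ‖x − y‖₁. -/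
/-- The function `ψ(y) = σ(min{min_{k≠j}(1 + y_k − y_j), min_k(1 + y_k), min_k(1 − y_k)})`,
where `σ` is the ReLU.  (For `k = j` the value `1 + y_k` is used, which is already a member
of the second family, so the minimum is unchanged.) -/
noncomputable def psi (d : ℕ) (hd : 0 < d) (y : Fin d → ℝ) : ℝ :=
  max ((Finset.univ : Finset ((Fin d × Fin d) ⊕ (Fin d ⊕ Fin d))).inf'
    ⟨Sum.inr (Sum.inl ⟨0, hd⟩), Finset.mem_univ _⟩
    (fun p => match p with
      | Sum.inl (k, j) => if k = j then 1 + y k else 1 + y k - y j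
      | Sum.inr (Sum.inl k) => 1 + y k
      | Sum.inr (Sum.inr k) => 1 - y k)) 0

lemma psi_le_aux (d : ℕ) (hd : 0 < d) (u v : Fin d → ℝ) :
    psi d hd u ≤ psi d hd v + 2 * ∑ k, |u k - v k| := by
  have hS : 0 ≤ ∑ k, |u k - v k| := Finset.sum_nonneg fun k _ => abs_nonneg _
  have hk : ∀ k, |u k - v k| ≤ ∑ k, |u k - v k| := fun k =>
    Finset.single_le_sum (f := fun k => |u k - v k|) (fun k _ => abs_nonneg _) (Finset.mem_univ k)
  generalize (∑ k, |u k - v k|) = S at hS hk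
  unfold psi
  apply max_le
  · rw [← sub_le_iff_le_add]
    refine le_trans ?_ (le_max_left _ _)
    apply Finset.le_inf'
    intro p _
    rw [sub_le_iff_le_add]
    refine le_trans (Finset.inf'_le _ (Finset.mem_univ p)) ?_
    rcases p with ⟨k, j⟩ | k | k
    · have h1 := abs_le.1 (hk k)
      have h2 := abs_le.1 (hk j)
      dsimp only
      split_ifs <;> linarith
    · have h1 := abs_le.1 (hk k)
      dsimp only
      linarith
    · have h1 := abs_le.1 (hk k)
      dsimp only
      linarith
  · exact add_nonneg (le_max_right _ _) (by linarith)

lemma psi_abs_aux (d : ℕ) (hd : 0 < d) (u v : Fin d → ℝ) :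
    |psi d hd u - psi d hd v| ≤ 2 * ∑ k, |u k - v k| := by
  have h1 := psi_le_aux d hd u v
  have h2 := psi_le_aux d hd v u
  simp only [abs_sub_comm (v _) (u _)] at h2
  rw [abs_le]
  constructor <;> linarith

/-- Any network output `h(y) = ∑_{i=1}^{(N+1)^{d₁}} cᵢ ψ((N/(2R))(y − bᵢ))` with `|cᵢ| ≤ L`
satisfies `|h(x) − h(y)| ≤ (L/R) N (N+1)^{d₁} (d₁² + d₁) ‖x − y‖₁`. -/
theorem abs_network_sub_le (d₁ N : ℕ) (hd : 0 < d₁) (hN : 0 < N)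
    (L R : ℝ) (hL : 0 ≤ L) (hR : 0 < R)
    (c : Fin ((N + 1) ^ d₁) → ℝ) (hc : ∀ i, |c i| ≤ L)
    (b : Fin ((N + 1) ^ d₁) → Fin d₁ → ℝ) (x y : Fin d₁ → ℝ) :
    |(∑ i, c i * psi d₁ hd (fun k => (N / (2 * R)) * (x k - b i k))) -
      (∑ i, c i * psi d₁ hd (fun k => (N / (2 * R)) * (y k - b i k)))| ≤
      (L / R) * N * ((N : ℝ) + 1) ^ d₁ * ((d₁ : ℝ) ^ 2 + d₁) * ∑ k, |x k - y k| := by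
  have hS : 0 ≤ ∑ k, |x k - y k| := Finset.sum_nonneg fun k _ => abs_nonneg _
  have hN0 : (0 : ℝ) < N := by exact_mod_cast hN
  have hd1 : (1 : ℝ) ≤ d₁ := by exact_mod_cast hd
  have key : ∀ i, |c i * psi d₁ hd (fun k => (N / (2 * R)) * (x k - b i k)) -
      c i * psi d₁ hd (fun k => (N / (2 * R)) * (y k - b i k))| ≤
      L * (N / R * ∑ k, |x k - y k|) := by
    intro i
    rw [← mul_sub, abs_mul]
    refine mul_le_mul (hc i) ?_ (abs_nonneg _) hL
    refine (psi_abs_aux d₁ hd _ _).trans (le_of_eq ?_)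
    have : ∀ k, |(N / (2 * R)) * (x k - b i k) - (N / (2 * R)) * (y k - b i k)| =
        (N / (2 * R)) * |x k - y k| := by
      intro k
      rw [← mul_sub, abs_mul, abs_of_pos (by positivity)]
      congr 2
      ring
    simp only [this]
    rw [← Finset.mul_sum]
    field_simp
  rw [← Finset.sum_sub_distrib]
  refine (Finset.abs_sum_le_sum_abs _ _).trans ?_
  refine (Finset.sum_le_sum fun i _ => key i).trans ?_
  rw [Finset.sum_const, Finset.card_univ, Fintype.card_fin, nsmul_eq_mul]
  push_cast
  have hA : 0 ≤ (L / R) * N * ((N : ℝ) + 1) ^ d₁ * ∑ k, |x k - y k| := by positivity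
  have hq : 1 ≤ (d₁ : ℝ) ^ 2 + d₁ := by nlinarith
  calc _ = ((L / R) * N * ((N : ℝ) + 1) ^ d₁ * ∑ k, |x k - y k|) * 1 := by ring
    _ ≤ ((L / R) * N * ((N : ℝ) + 1) ^ d₁ * ∑ k, |x k - y k|) * ((d₁ : ℝ) ^ 2 + d₁) :=
        mul_le_mul_of_nonneg_left hq hA
    _ = _ := by ring
end

section
/- For all real numbers β > 0, γ > 0 and every nonnegative integer i, one has β / ( γ^{2i} · ( (β²/2)(1 + √(1 + (2/(βγ))²)) + 1/γ² )^{i + 1/2} ) ≤ βγ / (1 + βγ/2)^{2i+1}. -/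
/-- For all `β, γ > 0` and every nonnegative integer `i`,
`β / (γ^{2i} ((β²/2)(1 + √(1 + (2/(βγ))²)) + 1/γ²)^{i + 1/2}) ≤ βγ / (1 + βγ/2)^{2i+1}`:
the explicit Gaussian-kernel eigenvalues decay at least geometrically. -/
theorem gaussian_eigenvalue_bound (β γ : ℝ) (hβ : 0 < β) (hγ : 0 < γ) (i : ℕ) :
    β / (γ ^ (2 * i) *
        ((β ^ 2 / 2) * (1 + Real.sqrt (1 + (2 / (β * γ)) ^ 2)) + 1 / γ ^ 2) ^
          ((i : ℝ) + 1 / 2)) ≤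
      β * γ / (1 + β * γ / 2) ^ (2 * i + 1) := by
  have hx : 0 < β * γ := mul_pos hβ hγ
  have hs : 2 / (β * γ) ≤ Real.sqrt (1 + (2 / (β * γ)) ^ 2) :=
    Real.le_sqrt_of_sq_le (by linarith)
  set B : ℝ := (1 + β * γ / 2) / γ with hB
  have hBpos : 0 < B := by positivity
  have hA : B ^ 2 ≤ (β ^ 2 / 2) * (1 + Real.sqrt (1 + (2 / (β * γ)) ^ 2)) + 1 / γ ^ 2 := by
    have h1 : (β ^ 2 / 2) * (1 + 2 / (β * γ)) + 1 / γ ^ 2 = B ^ 2 + β ^ 2 / 4 := by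
      rw [hB]
      field_simp
      ring
    have h2 : (β ^ 2 / 2) * (1 + 2 / (β * γ)) ≤
        (β ^ 2 / 2) * (1 + Real.sqrt (1 + (2 / (β * γ)) ^ 2)) := by gcongr
    have h3 : 0 ≤ β ^ 2 / 4 := by positivity
    linarith
  have hp : B ^ (2 * i + 1) ≤
      ((β ^ 2 / 2) * (1 + Real.sqrt (1 + (2 / (β * γ)) ^ 2)) + 1 / γ ^ 2) ^
          ((i : ℝ) + 1 / 2) := by
    have h := Real.rpow_le_rpow (by positivity) hA (show (0:ℝ) ≤ (i : ℝ) + 1 / 2 by positivity)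
    have e : (B ^ 2) ^ ((i : ℝ) + 1 / 2) = B ^ (2 * i + 1) := by
      rw [← Real.rpow_natCast B 2, ← Real.rpow_mul hBpos.le, ← Real.rpow_natCast B (2 * i + 1)]
      congr 1
      push_cast
      ring
    rwa [e] at h
  calc _ ≤ β / (γ ^ (2 * i) * B ^ (2 * i + 1)) := by gcongr
    _ = _ := by
      rw [hB, div_pow, pow_succ γ]
      field_simp
end
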